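/- Let P be a non-signalling behaviour with two settings x,y ∈ {0,1} whose maximal absolute CHSH value satisfies S_max ≤ 2√2 (as holds for all quantum behaviours by Tsirelson's bound). Then the supremum of p ∈ [0,1] such that P = p·P_L + (1−p)·Q pointwise for some behaviour P_L admitting an LHV+FHV model and some behaviour Q is at least 2 − √2; moreover, if S_max = 2√2, this supremum equals exactly 2 − √2. -/

import Mathlib

/-!
Every CHSH expression, with its sign, is `Σ_{x,y} ± ⟨ab⟩_{xy}` for a sign pattern `s` with an odd
number of minus signs, and `Smax P` is the largest of these eight values (`chsh_le_Smax`,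
`exists_chsh_eq_Smax`).

If all of them are at most `2`, Fine's theorem (`localFree_of_chsh_le`) makes `P` itself local, so
the weight `1` is attained. Otherwise some pattern `s` has `chsh s P ≥ 2`. The non-signalling
behaviours beyond this facet form a simplex whose vertices are the PR box of `s` and the eight
deterministic behaviours that violate exactly one of the four conditions `a b = s x y`. The
barycentric coordinate of such a deterministic behaviour is the probability that `P` assigns to its
unique losing event, so the total local weight is `(4 - chsh s P) / 2` (`simplex_decomposition`),
which is at least `2 - √2` under Tsirelson's bound.

Conversely `chsh s` is at most `2` on local behaviours and at most `4` on all behaviours, so local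
weight `p` forces `Smax P ≤ 2 p + 4 (1 - p)`; at `Smax P = 2 √2` this reads `p ≤ 2 - √2`.
-/


open scoped BigOperators Classical
open Finset

noncomputable section

/-- The real value `±1` associated with a Boolean outcome. -/
def outVal (a : Bool) : ℝ := if a then 1 else -1

/-- A behaviour: nonnegative probabilities summing to one for every pair of settings. -/
def IsBehaviour {M N : ℕ} (P : Bool → Bool → Fin M → Fin N → ℝ) : Prop :=
  (∀ a b x y, 0 ≤ P a b x y) ∧ (∀ x y, ∑ a, ∑ b, P a b x y = 1)

/-- The correlator `⟨ab⟩_{xy}`. -/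
def corr {M N : ℕ} (P : Bool → Bool → Fin M → Fin N → ℝ) (x : Fin M) (y : Fin N) : ℝ :=
  ∑ a, ∑ b, outVal a * outVal b * P a b x y

/-- Non-signalling for a two-setting behaviour. -/
def NonSignalling (P : Bool → Bool → Fin 2 → Fin 2 → ℝ) : Prop :=
  (∀ a x y y', ∑ b, P a b x y = ∑ b, P a b x y') ∧
  (∀ b y x x', ∑ a, P a b x y = ∑ a, P a b x' y)

def S1 (P : Bool → Bool → Fin 2 → Fin 2 → ℝ) : ℝ :=
  corr P 0 0 + corr P 0 1 + corr P 1 0 - corr P 1 1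

def S2 (P : Bool → Bool → Fin 2 → Fin 2 → ℝ) : ℝ :=
  corr P 0 0 + corr P 0 1 - corr P 1 0 + corr P 1 1

def S3 (P : Bool → Bool → Fin 2 → Fin 2 → ℝ) : ℝ :=
  corr P 0 0 - corr P 0 1 + corr P 1 0 + corr P 1 1

def S4 (P : Bool → Bool → Fin 2 → Fin 2 → ℝ) : ℝ :=
  -corr P 0 0 + corr P 0 1 + corr P 1 0 + corr P 1 1

/-- Maximal absolute value of the four CHSH expressions. -/
def Smax (P : Bool → Bool → Fin 2 → Fin 2 → ℝ) : ℝ :=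
  max (max |S1 P| |S2 P|) (max |S3 P| |S4 P|)

/-- A behaviour admits an LHV+FHV model (is local-free). -/
def LocalFree {M N : ℕ} (P : Bool → Bool → Fin M → Fin N → ℝ) : Prop :=
  ∃ (n : ℕ) (q : Fin n → ℝ) (A : Bool → Fin M → Fin n → ℝ) (B : Bool → Fin N → Fin n → ℝ),
    (∀ l, 0 ≤ q l) ∧ (∑ l, q l = 1) ∧
    (∀ a x l, 0 ≤ A a x l) ∧ (∀ x l, ∑ a, A a x l = 1) ∧
    (∀ b y l, 0 ≤ B b y l) ∧ (∀ y l, ∑ b, B b y l = 1) ∧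
    (∀ a b x y, P a b x y = ∑ l, q l * A a x l * B b y l)

/-- Sign patterns of CHSH expressions: an odd number of minus signs (`false` encodes `-1`). -/
def OddPattern (s : Fin 2 → Fin 2 → Bool) : Prop :=
  xor (xor (s 0 0) (s 0 1)) (xor (s 1 0) (s 1 1)) = true

/-- The correlator combination with the signs prescribed by `s`. -/
def chsh (s : Fin 2 → Fin 2 → Bool) (P : Bool → Bool → Fin 2 → Fin 2 → ℝ) : ℝ :=
  ∑ x, ∑ y, outVal (s x y) * corr P x y

/-- The sign pattern with the four given entries. -/
def pat (c d e f : Bool) : Fin 2 → Fin 2 → Bool := ![![c, d], ![e, f]]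

/-- The values of `p` for which `P` has a decomposition with local weight `p`. -/
def localWeights (P : Bool → Bool → Fin 2 → Fin 2 → ℝ) : Set ℝ :=
  {p : ℝ | p ∈ Set.Icc (0 : ℝ) 1 ∧
    ∃ PL Q : Bool → Bool → Fin 2 → Fin 2 → ℝ,
      IsBehaviour PL ∧ LocalFree PL ∧ IsBehaviour Q ∧
      ∀ a b x y, P a b x y = p * PL a b x y + (1 - p) * Q a b x y}

lemma pat_eta (s : Fin 2 → Fin 2 → Bool) : pat (s 0 0) (s 0 1) (s 1 0) (s 1 1) = s := by
  funext x y
  fin_cases x <;> fin_cases y <;> rfl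

/-- An odd pattern is one of `±S1, …, ±S4`. -/
lemma chsh_odd_cases {s : Fin 2 → Fin 2 → Bool} (hs : OddPattern s)
    (P : Bool → Bool → Fin 2 → Fin 2 → ℝ) :
    chsh s P = S1 P ∨ chsh s P = -S1 P ∨ chsh s P = S2 P ∨ chsh s P = -S2 P ∨
    chsh s P = S3 P ∨ chsh s P = -S3 P ∨ chsh s P = S4 P ∨ chsh s P = -S4 P := by
  unfold OddPattern at hs
  simp only [chsh, Fin.sum_univ_two, S1, S2, S3, S4]
  generalize corr P 0 0 = c0
  generalize corr P 0 1 = c1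
  generalize corr P 1 0 = c2
  generalize corr P 1 1 = c3
  revert hs
  generalize s 0 0 = s0
  generalize s 0 1 = s1
  generalize s 1 0 = s2
  generalize s 1 1 = s3
  intro hs
  cases s0 <;> cases s1 <;> cases s2 <;> cases s3 <;> simp at hs <;> simp only [outVal] <;>
    simp only [if_true, if_false, Bool.false_eq_true] <;>
    first
    | exact Or.inl (by ring1)
    | exact Or.inr (Or.inl (by ring1))
    | exact Or.inr (Or.inr (Or.inl (by ring1)))
    | exact Or.inr (Or.inr (Or.inr (Or.inl (by ring1))))
    | exact Or.inr (Or.inr (Or.inr (Or.inr (Or.inl (by ring1)))))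
    | exact Or.inr (Or.inr (Or.inr (Or.inr (Or.inr (Or.inl (by ring1))))))
    | exact Or.inr (Or.inr (Or.inr (Or.inr (Or.inr (Or.inr (Or.inl (by ring1)))))))
    | exact Or.inr (Or.inr (Or.inr (Or.inr (Or.inr (Or.inr (Or.inr (by ring1)))))))

lemma chsh_le_Smax {s : Fin 2 → Fin 2 → Bool} (hs : OddPattern s)
    (P : Bool → Bool → Fin 2 → Fin 2 → ℝ) : chsh s P ≤ Smax P := by
  have h1 : |S1 P| ≤ Smax P := le_max_of_le_left (le_max_left _ _)
  have h2 : |S2 P| ≤ Smax P := le_max_of_le_left (le_max_right _ _)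
  have h3 : |S3 P| ≤ Smax P := le_max_of_le_right (le_max_left _ _)
  have h4 : |S4 P| ≤ Smax P := le_max_of_le_right (le_max_right _ _)
  rw [abs_le] at h1 h2 h3 h4
  rcases chsh_odd_cases hs P with h | h | h | h | h | h | h | h <;> rw [h] <;> linarith

lemma chsh_pat (c d e f : Bool) (P : Bool → Bool → Fin 2 → Fin 2 → ℝ) :
    chsh (pat c d e f) P = outVal c * corr P 0 0 + outVal d * corr P 0 1 +
      (outVal e * corr P 1 0 + outVal f * corr P 1 1) := by
  simp [chsh, pat, Fin.sum_univ_two]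

lemma exists_chsh_eq_Smax (P : Bool → Bool → Fin 2 → Fin 2 → ℝ) :
    ∃ s, OddPattern s ∧ chsh s P = Smax P := by
  have key : ∀ c d e f : Bool, xor (xor c d) (xor e f) = true → ∀ S : ℝ,
      S = outVal c * corr P 0 0 + outVal d * corr P 0 1 +
        (outVal e * corr P 1 0 + outVal f * corr P 1 1) →
      ∃ s, OddPattern s ∧ chsh s P = |S| := by
    intro c d e f h S hS
    rcases abs_choice S with h' | h' <;> rw [h', hS]
    · exact ⟨pat c d e f, h, chsh_pat _ _ _ _ _⟩
    · refine ⟨pat (!c) (!d) (!e) (!f), ?_, ?_⟩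
      · simpa [OddPattern, pat] using h
      · have hn : ∀ b, outVal (!b) = -outVal b := by intro b; cases b <;> simp [outVal]
        rw [chsh_pat, hn, hn, hn, hn]
        ring
  unfold Smax
  rcases max_choice (max |S1 P| |S2 P|) (max |S3 P| |S4 P|) with h | h <;> rw [h]
  · rcases max_choice |S1 P| |S2 P| with h | h <;> rw [h]
    · exact key true true true false rfl _ (by simp [S1, outVal]; ring)
    · exact key true true false true rfl _ (by simp [S2, outVal]; ring)
  · rcases max_choice |S3 P| |S4 P| with h | h <;> rw [h]
    · exact key true false true true rfl _ (by simp [S3, outVal]; ring)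
    · exact key false true true true rfl _ (by simp [S4, outVal]; ring)

/-- A local model may be indexed by any finite type. -/
lemma localFree_of_fintype {Λ : Type} [Fintype Λ] {M N : ℕ}
    {P : Bool → Bool → Fin M → Fin N → ℝ}
    (q : Λ → ℝ) (A : Bool → Fin M → Λ → ℝ) (B : Bool → Fin N → Λ → ℝ)
    (hq : ∀ l, 0 ≤ q l) (hq1 : ∑ l, q l = 1)
    (hA : ∀ a x l, 0 ≤ A a x l) (hA1 : ∀ x l, ∑ a, A a x l = 1)
    (hB : ∀ b y l, 0 ≤ B b y l) (hB1 : ∀ y l, ∑ b, B b y l = 1)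
    (h : ∀ a b x y, P a b x y = ∑ l, q l * A a x l * B b y l) : LocalFree P := by
  let e := (Fintype.equivFin Λ).symm
  refine ⟨Fintype.card Λ, fun i => q (e i), fun a x i => A a x (e i), fun b y i => B b y (e i),
    fun _ => hq _, ?_, fun _ _ _ => hA _ _ _, fun _ _ => hA1 _ _, fun _ _ _ => hB _ _ _,
    fun _ _ => hB1 _ _, ?_⟩
  · rw [Equiv.sum_comp e q, hq1]
  · intro a b x y
    rw [h, Equiv.sum_comp e (fun l => q l * A a x l * B b y l)]

lemma LocalFree.isBehaviour {M N : ℕ} {P : Bool → Bool → Fin M → Fin N → ℝ}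
    (h : LocalFree P) : IsBehaviour P := by
  obtain ⟨n, q, A, B, hq, hq1, hA, hA1, hB, hB1, h⟩ := h
  refine ⟨fun a b x y => ?_, fun x y => ?_⟩
  · rw [h]
    exact Finset.sum_nonneg fun l _ => mul_nonneg (mul_nonneg (hq l) (hA _ _ _)) (hB _ _ _)
  · simp only [h, Fintype.sum_bool] at *
    rw [← hq1, ← Finset.sum_add_distrib, ← Finset.sum_add_distrib, ← Finset.sum_add_distrib]
    refine Finset.sum_congr rfl fun l _ => ?_
    have e1 : A true x l = 1 - A false x l := by linarith [hA1 x l]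
    have e2 : B true y l = 1 - B false y l := by linarith [hB1 y l]
    rw [e1, e2]
    ring

/-! ### Upper bounds on CHSH expressions -/

lemma chsh_scalar {u v c d : ℝ} (hu : |u| ≤ 1) (hv : |v| ≤ 1) (hc : |c| ≤ 1) (hd : |d| ≤ 1) :
    u * (c + d) + v * (c - d) ≤ 2 := by
  have h1 : u * (c + d) ≤ |c + d| := by
    calc u * (c + d) ≤ |u * (c + d)| := le_abs_self _
      _ = |u| * |c + d| := abs_mul _ _
      _ ≤ 1 * |c + d| := by gcongr
      _ = _ := one_mul _
  have h2 : v * (c - d) ≤ |c - d| := by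
    calc v * (c - d) ≤ |v * (c - d)| := le_abs_self _
      _ = |v| * |c - d| := abs_mul _ _
      _ ≤ 1 * |c - d| := by gcongr
      _ = _ := one_mul _
  rw [abs_le] at hc hd
  have h3 : |c + d| + |c - d| ≤ 2 := by
    rcases abs_cases (c + d) with h | h <;> rcases abs_cases (c - d) with h' | h' <;> linarith
  linarith

lemma chsh_product_le {s : Fin 2 → Fin 2 → Bool} (hs : OddPattern s) (α β : Fin 2 → ℝ)
    (hα : ∀ x, |α x| ≤ 1) (hβ : ∀ y, |β y| ≤ 1) :
    ∑ x, ∑ y, outVal (s x y) * (α x * β y) ≤ 2 := by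
  unfold OddPattern at hs
  simp only [Fin.sum_univ_two]
  have a0 := hα 0
  have a1 := hα 1
  have b0 := hβ 0
  have b1 := hβ 1
  have na0 : |-α 0| ≤ 1 := by rwa [abs_neg]
  have na1 : |-α 1| ≤ 1 := by rwa [abs_neg]
  have k1 := chsh_scalar a0 a1 b0 b1
  have k2 := chsh_scalar a0 na1 b0 b1
  have k3 := chsh_scalar na0 a1 b0 b1
  have k4 := chsh_scalar na0 na1 b0 b1
  have k5 := chsh_scalar a1 a0 b0 b1
  have k6 := chsh_scalar a1 na0 b0 b1
  have k7 := chsh_scalar na1 a0 b0 b1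
  have k8 := chsh_scalar na1 na0 b0 b1
  revert hs
  generalize s 0 0 = s0
  generalize s 0 1 = s1
  generalize s 1 0 = s2
  generalize s 1 1 = s3
  intro hs
  cases s0 <;> cases s1 <;> cases s2 <;> cases s3 <;> simp at hs <;> simp only [outVal] <;>
    simp only [if_true, if_false, Bool.false_eq_true] <;> linarith

lemma chsh_le_two_of_localFree {s : Fin 2 → Fin 2 → Bool} (hs : OddPattern s)
    {P : Bool → Bool → Fin 2 → Fin 2 → ℝ} (h : LocalFree P) : chsh s P ≤ 2 := by
  obtain ⟨n, q, A, B, hq, hq1, hA, hA1, hB, hB1, h⟩ := h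
  have hcorr : ∀ x y, corr P x y =
      ∑ l, q l * ((A true x l - A false x l) * (B true y l - B false y l)) := by
    intro x y
    simp only [corr, h, Fintype.sum_bool, Finset.mul_sum]
    rw [← Finset.sum_add_distrib, ← Finset.sum_add_distrib, ← Finset.sum_add_distrib]
    refine Finset.sum_congr rfl fun l _ => ?_
    simp [outVal]
    ring
  have hsum : chsh s P = ∑ l, q l * ∑ x, ∑ y, outVal (s x y) *
      ((A true x l - A false x l) * (B true y l - B false y l)) := by
    simp only [chsh, hcorr, Fin.sum_univ_two, Finset.mul_sum]
    rw [← Finset.sum_add_distrib, ← Finset.sum_add_distrib, ← Finset.sum_add_distrib]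
    refine Finset.sum_congr rfl fun l _ => ?_
    ring
  rw [hsum]
  calc _ ≤ ∑ l, q l * 2 := by
        refine Finset.sum_le_sum fun l _ => mul_le_mul_of_nonneg_left ?_ (hq l)
        refine chsh_product_le hs (fun x => A true x l - A false x l)
          (fun y => B true y l - B false y l) (fun x => ?_) (fun y => ?_)
        · have := hA1 x l
          rw [Fintype.sum_bool] at this
          rw [abs_le]
          constructor <;> linarith [hA true x l, hA false x l]
        · have := hB1 y l
          rw [Fintype.sum_bool] at this
          rw [abs_le]
          constructor <;> linarith [hB true y l, hB false y l]
    _ = 2 := by rw [← Finset.sum_mul, hq1, one_mul]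

lemma chsh_le_four {P : Bool → Bool → Fin 2 → Fin 2 → ℝ} (s : Fin 2 → Fin 2 → Bool)
    (h : IsBehaviour P) : chsh s P ≤ 4 := by
  have key : ∀ x y, outVal (s x y) * corr P x y ≤ 1 := by
    intro x y
    have h1 := h.2 x y
    simp only [corr, Fintype.sum_bool] at *
    have := h.1 true true x y
    have := h.1 true false x y
    have := h.1 false true x y
    have := h.1 false false x y
    cases s x y <;> simp [outVal] <;> linarith
  simp only [chsh, Fin.sum_univ_two]
  linarith [key 0 0, key 0 1, key 1 0, key 1 1]

/-- The local weight of a behaviour is bounded by each of its CHSH values. -/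
lemma localWeights_le {P : Bool → Bool → Fin 2 → Fin 2 → ℝ} {s : Fin 2 → Fin 2 → Bool}
    (hs : OddPattern s) {p : ℝ} (hp : p ∈ localWeights P) : p ≤ (4 - chsh s P) / 2 := by
  obtain ⟨⟨hp0, hp1⟩, PL, Q, -, hL, hQ, h⟩ := hp
  have e : chsh s P = p * chsh s PL + (1 - p) * chsh s Q := by
    simp only [chsh, corr, h, Fin.sum_univ_two, Fintype.sum_bool]
    ring
  have h1 := mul_le_mul_of_nonneg_left (chsh_le_two_of_localFree hs hL) hp0
  have h2 := mul_le_mul_of_nonneg_left (chsh_le_four s hQ) (sub_nonneg.2 hp1)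
  linarith

/-! ### The simplex beyond a CHSH facet -/

/-- Alice's deterministic answer in the strategy losing the game `a b = s x y` only at the
settings `(l.2.1, l.2.2)`, where she answers `l.1`. -/
def stratA (s : Fin 2 → Fin 2 → Bool) (l : Bool × Fin 2 × Fin 2) (x : Fin 2) : Bool :=
  if x = l.2.1 then l.1 else (xor l.1 (s l.2.1 l.2.2) == s x l.2.2)

/-- Bob's deterministic answer in the strategy of `stratA`. -/
def stratB (s : Fin 2 → Fin 2 → Bool) (l : Bool × Fin 2 × Fin 2) (y : Fin 2) : Bool :=
  if y = l.2.2 then xor l.1 (s l.2.1 l.2.2) else (l.1 == s l.2.1 y)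

/-- The probability under `P` of the unique losing event of the strategy `l`. -/
def loseWeight (s : Fin 2 → Fin 2 → Bool) (P : Bool → Bool → Fin 2 → Fin 2 → ℝ)
    (l : Bool × Fin 2 × Fin 2) : ℝ :=
  P l.1 (xor l.1 (s l.2.1 l.2.2)) l.2.1 l.2.2

/-- The Popescu–Rohrlich box winning the game `a b = s x y` with certainty. -/
def prBox (s : Fin 2 → Fin 2 → Bool) (a b : Bool) (x y : Fin 2) : ℝ :=
  if (a == b) = s x y then 1 / 2 else 0

lemma prBox_isBehaviour (s : Fin 2 → Fin 2 → Bool) : IsBehaviour (prBox s) := by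
  refine ⟨fun a b x y => ?_, fun x y => ?_⟩
  · unfold prBox
    split_ifs <;> norm_num
  · simp only [prBox, Fintype.sum_bool]
    cases s x y <;> norm_num

lemma sum_loseWeight {P : Bool → Bool → Fin 2 → Fin 2 → ℝ} (s : Fin 2 → Fin 2 → Bool)
    (hP : IsBehaviour P) : ∑ l, loseWeight s P l = (4 - chsh s P) / 2 := by
  have key : ∀ x y, P true (xor true (s x y)) x y + P false (xor false (s x y)) x y =
      (1 - outVal (s x y) * corr P x y) / 2 := by
    intro x y
    have h1 := hP.2 x y
    simp only [corr, Fintype.sum_bool] at *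
    cases s x y <;> simp [outVal] <;> linarith
  simp only [Fintype.sum_prod_type, Fintype.sum_bool, Fin.sum_univ_two, loseWeight, chsh]
  linarith [key 0 0, key 0 1, key 1 0, key 1 1]

/-- Barycentric coordinates in the simplex spanned by the PR box and the eight deterministic
strategies losing exactly once. -/
lemma simplex_decomposition {P : Bool → Bool → Fin 2 → Fin 2 → ℝ} {s : Fin 2 → Fin 2 → Bool}
    (hs : OddPattern s) (hP : IsBehaviour P) (hNS : NonSignalling P) (a b : Bool) (x y : Fin 2) :
    P a b x y = ∑ l, loseWeight s P l * (if stratA s l x = a then 1 else 0) *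
        (if stratB s l y = b then 1 else 0) +
      (1 - ∑ l, loseWeight s P l) * prBox s a b x y := by
  have n00 := hP.2 0 0
  have n01 := hP.2 0 1
  have n10 := hP.2 1 0
  have n11 := hP.2 1 1
  have m0 := hNS.1 true 0 0 1
  have m1 := hNS.1 true 1 0 1
  have m2 := hNS.2 true 0 0 1
  have m3 := hNS.2 true 1 0 1
  obtain ⟨c, d, e, f, rfl⟩ : ∃ c d e f, s = pat c d e f := ⟨_, _, _, _, (pat_eta s).symm⟩
  simp only [OddPattern, pat, Matrix.cons_val_zero, Matrix.cons_val_one] at hs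
  simp only [Fintype.sum_bool] at n00 n01 n10 n11 m0 m1 m2 m3
  simp only [Fintype.sum_prod_type, Fintype.sum_bool, Fin.sum_univ_two, loseWeight, stratA,
    stratB, prBox]
  cases c <;> cases d <;> cases e <;> cases f <;> simp at hs <;> fin_cases x <;> fin_cases y <;>
    cases a <;> cases b <;> simp [pat] <;> linarith

lemma mem_localWeights_of_two_le {P : Bool → Bool → Fin 2 → Fin 2 → ℝ}
    {s : Fin 2 → Fin 2 → Bool} (hs : OddPattern s) (hP : IsBehaviour P) (hNS : NonSignalling P)
    (h2 : 2 ≤ chsh s P) (h4 : chsh s P < 4) : (4 - chsh s P) / 2 ∈ localWeights P := by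
  have hsum := sum_loseWeight s hP
  have hdec := simplex_decomposition hs hP hNS
  rw [hsum] at hdec
  have hp0 : 0 < (4 - chsh s P) / 2 := by linarith
  have hp1 : (4 - chsh s P) / 2 ≤ 1 := by linarith
  generalize (4 - chsh s P) / 2 = p at *
  have hloc : LocalFree (fun a b x y => ∑ l, loseWeight s P l / p *
      (if stratA s l x = a then 1 else 0) * (if stratB s l y = b then 1 else 0)) := by
    refine localFree_of_fintype (fun l => loseWeight s P l / p)
      (fun a x l => if stratA s l x = a then 1 else 0)
      (fun b y l => if stratB s l y = b then 1 else 0)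
      (fun l => div_nonneg (hP.1 _ _ _ _) hp0.le) ?_ ?_ ?_ ?_ ?_ (fun _ _ _ _ => rfl)
    · rw [← Finset.sum_div, hsum, div_self hp0.ne']
    · intro a x l
      split_ifs <;> norm_num
    · intro x l
      simp
    · intro b y l
      split_ifs <;> norm_num
    · intro y l
      simp
  refine ⟨⟨hp0.le, hp1⟩, _, prBox s, hloc.isBehaviour, hloc, prBox_isBehaviour s, ?_⟩
  intro a b x y
  rw [hdec a b x y, Finset.mul_sum]
  congr 1
  refine Finset.sum_congr rfl fun l _ => ?_
  field_simp

/-! ### Fine's theorem -/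

/-- Joint distributions of Alice's two answers with each single answer of Bob, sharing the
marginal `q` on Alice's side, give a local model: the hidden variable is Alice's pair of answers,
and Bob answers with the conditional probabilities. -/
lemma localFree_of_triples {P : Bool → Bool → Fin 2 → Fin 2 → ℝ} (hP : IsBehaviour P)
    (q : Bool → Bool → ℝ) (r : Fin 2 → Bool → Bool → Bool → ℝ)
    (hr : ∀ y a a' b, 0 ≤ r y a a' b) (hq : ∀ y a a', ∑ b, r y a a' b = q a a')
    (h0 : ∀ y a b, ∑ a', r y a a' b = P a b 0 y)
    (h1 : ∀ y a' b, ∑ a, r y a a' b = P a' b 1 y) : LocalFree P := by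
  have hq0 : ∀ a a', 0 ≤ q a a' := fun a a' => by
    rw [← hq 0]
    exact Finset.sum_nonneg fun b _ => hr _ _ _ _
  -- Where `q` vanishes Bob's response is irrelevant, since `r` vanishes there as well.
  have hmul : ∀ y a a' b, q a a' * (if q a a' = 0 then 1 / 2 else r y a a' b / q a a') =
      r y a a' b := by
    intro y a a' b
    split_ifs with h
    · have := hq y a a'
      rw [Fintype.sum_bool, h] at this
      have k1 := hr y a a' true
      have k2 := hr y a a' false
      rw [h, zero_mul]
      cases b <;> linarith
    · field_simp
  refine localFree_of_fintype (Λ := Bool × Bool) (fun l => q l.1 l.2)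
    (fun a x l => if (if x = 0 then l.1 else l.2) = a then 1 else 0)
    (fun b y l => if q l.1 l.2 = 0 then 1 / 2 else r y l.1 l.2 b / q l.1 l.2)
    (fun l => hq0 _ _) ?_ ?_ ?_ ?_ ?_ ?_
  · have hn := hP.2 0 0
    simp only [← h0, Fintype.sum_bool] at hn
    simp only [Fintype.sum_prod_type, ← hq 0, Fintype.sum_bool]
    linarith
  · intro a x l
    split_ifs <;> norm_num
  · intro x l
    simp
  · intro b y l
    split_ifs
    · norm_num
    · exact div_nonneg (hr _ _ _ _) (hq0 _ _)
  · intro y l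
    by_cases h : q l.1 l.2 = 0
    · simp only [h, if_true, Fintype.sum_bool]
      norm_num
    · simp only [h, if_false]
      rw [← Finset.sum_div, hq, div_self h]
  · intro a b x y
    have e : ∀ l : Bool × Bool, q l.1 l.2 * (if (if x = 0 then l.1 else l.2) = a then 1 else 0) *
        (if q l.1 l.2 = 0 then 1 / 2 else r y l.1 l.2 b / q l.1 l.2) =
        (if (if x = 0 then l.1 else l.2) = a then 1 else 0) * r y l.1 l.2 b := by
      intro l
      linear_combination (if (if x = 0 then l.1 else l.2) = a then (1 : ℝ) else 0) *
        hmul y l.1 l.2 b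
    simp only [e, Fintype.sum_prod_type, Fintype.sum_bool]
    fin_cases x
    · have := h0 y a b
      rw [Fintype.sum_bool] at this
      cases a <;> simp <;> linarith
    · have := h1 y a b
      rw [Fintype.sum_bool] at this
      cases a <;> simp <;> linarith

/-- Four lower bounds lying below four upper bounds leave room for a real number. -/
lemma exists_between_four {a b c d e f g h : ℝ}
    (h1 : a ≤ e ∧ a ≤ f ∧ a ≤ g ∧ a ≤ h) (h2 : b ≤ e ∧ b ≤ f ∧ b ≤ g ∧ b ≤ h)
    (h3 : c ≤ e ∧ c ≤ f ∧ c ≤ g ∧ c ≤ h) (h4 : d ≤ e ∧ d ≤ f ∧ d ≤ g ∧ d ≤ h) :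
    ∃ u, (a ≤ u ∧ b ≤ u ∧ c ≤ u ∧ d ≤ u) ∧ (u ≤ e ∧ u ≤ f ∧ u ≤ g ∧ u ≤ h) := by
  refine ⟨max (max a b) (max c d), by simp, ?_⟩
  simp only [max_le_iff]
  tauto

/-- The joint distribution of three `±1` variables as a function of `u = Pr(+,+,+)`, of the
probabilities `t`, `e0`, `e1` that a pair (first two; first and third; second and third) equals
`(+,+)`, and of the probabilities `p0`, `p1`, `m` that a single variable is `+`. -/
def triple (u t e0 e1 p0 p1 m : ℝ) : Bool → Bool → Bool → ℝ
  | true, true, true => u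
  | true, true, false => t - u
  | true, false, true => e0 - u
  | false, true, true => e1 - u
  | true, false, false => p0 - e0 - t + u
  | false, true, false => p1 - e1 - t + u
  | false, false, true => m - e0 - e1 + u
  | false, false, false => 1 - m - p0 - p1 + e0 + e1 + t - u

/-- Given the pair distributions of three `±1` variables, a joint distribution exists as soon as
Bell's three-variable inequalities hold. -/
lemma exists_triple {t e0 e1 p0 p1 m : ℝ} (ht : 0 ≤ t) (ht' : p0 + p1 - 1 ≤ t)
    (t0 : t ≤ p0) (t1 : t ≤ p1)
    (l1 : e0 + e1 - m ≤ t) (l2 : m + p0 + p1 - e0 - e1 - 1 ≤ t)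
    (u1 : t ≤ p0 + e1 - e0) (u2 : t ≤ p1 + e0 - e1)
    (he0 : 0 ≤ e0) (he1 : 0 ≤ e1) (he0p : e0 ≤ p0) (he1p : e1 ≤ p1) (he0m : e0 ≤ m)
    (he1m : e1 ≤ m) (hn0 : m + p0 - e0 ≤ 1) (hn1 : m + p1 - e1 ≤ 1) :
    ∃ u, ∀ a a' b, 0 ≤ triple u t e0 e1 p0 p1 m a a' b := by
  obtain ⟨u, ⟨h1, h2, h3, h4⟩, h5, h6, h7, h8⟩ :
      ∃ u, (0 ≤ u ∧ e0 + t - p0 ≤ u ∧ e1 + t - p1 ≤ u ∧ e0 + e1 - m ≤ u) ∧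
        (u ≤ t ∧ u ≤ e0 ∧ u ≤ e1 ∧ u ≤ 1 - m - p0 - p1 + e0 + e1 + t) := by
    apply exists_between_four <;> refine ⟨?_, ?_, ?_, ?_⟩ <;> linarith
  refine ⟨u, fun a a' b => ?_⟩
  cases a <;> cases a' <;> cases b <;> simp only [triple] <;> linarith

/-- Fine's theorem: the CHSH inequalities are sufficient for a local model. -/
lemma localFree_of_chsh_le {P : Bool → Bool → Fin 2 → Fin 2 → ℝ} (hP : IsBehaviour P)
    (hNS : NonSignalling P) (h : ∀ s, OddPattern s → chsh s P ≤ 2) : LocalFree P := by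
  have n := hP.2
  have mA := fun x y => hNS.1 true x y 0
  have mB := fun x y => hNS.2 true y x 0
  simp only [Fintype.sum_bool] at n mA mB
  have k1 := h (pat true true true false) rfl
  have k2 := h (pat true true false true) rfl
  have k3 := h (pat true false true true) rfl
  have k4 := h (pat false true true true) rfl
  have k5 := h (pat false false false true) rfl
  have k6 := h (pat false false true false) rfl
  have k7 := h (pat false true false false) rfl
  have k8 := h (pat true false false false) rfl
  simp only [chsh_pat, corr, outVal, Fintype.sum_bool, if_true, if_false,
    Bool.false_eq_true] at k1 k2 k3 k4 k5 k6 k7 k8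
  -- Alice's marginals `p x`, Bob's marginals `m y` and the joint probabilities `e x y` of `(+,+)`.
  obtain ⟨e, he⟩ : ∃ e : Fin 2 → Fin 2 → ℝ, ∀ x y, P true true x y = e x y := ⟨_, fun _ _ => rfl⟩
  obtain ⟨p, hp⟩ : ∃ p : Fin 2 → ℝ, ∀ x, P true true x 0 + P true false x 0 = p x :=
    ⟨_, fun _ => rfl⟩
  obtain ⟨m, hm⟩ : ∃ m : Fin 2 → ℝ, ∀ y, P true true 0 y + P false true 0 y = m y :=
    ⟨_, fun _ => rfl⟩
  have v1 : ∀ x y, P true false x y = p x - e x y := by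
    intro x y
    linarith [mA x y, hp x, he x y]
  have v2 : ∀ x y, P false true x y = m y - e x y := by
    intro x y
    linarith [mB x y, hm y, he x y]
  have v3 : ∀ x y, P false false x y = 1 - p x - m y + e x y := by
    intro x y
    linarith [n x y, v1 x y, v2 x y, he x y]
  have g0 : ∀ x y, 0 ≤ e x y := fun x y => he x y ▸ hP.1 true true x y
  have g1 : ∀ x y, 0 ≤ p x - e x y := fun x y => v1 x y ▸ hP.1 true false x y
  have g2 : ∀ x y, 0 ≤ m y - e x y := fun x y => v2 x y ▸ hP.1 false true x y
  have g3 : ∀ x y, 0 ≤ 1 - p x - m y + e x y := fun x y => v3 x y ▸ hP.1 false false x y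
  simp only [he, v1, v2, v3] at k1 k2 k3 k4 k5 k6 k7 k8
  have g := fun x y => And.intro (And.intro (g0 x y) (g1 x y)) (And.intro (g2 x y) (g3 x y))
  obtain ⟨⟨b1, b2⟩, b3, b4⟩ := g 0 0
  obtain ⟨⟨c1, c2⟩, c3, c4⟩ := g 0 1
  obtain ⟨⟨d1, d2⟩, d3, d4⟩ := g 1 0
  obtain ⟨⟨f1, f2⟩, f3, f4⟩ := g 1 1
  -- The least `t = Pr(a₀ = a₁ = +)` compatible with Bell's inequalities for both settings of Bob;
  -- the CHSH inequalities are exactly what keeps it below the upper bounds.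
  obtain ⟨t, ⟨ht0, ht1, l0, l0', l1, l1'⟩, t0, t1, u0, u0', u1, u1'⟩ : ∃ t : ℝ,
      (0 ≤ t ∧ p 0 + p 1 - 1 ≤ t ∧ e 0 0 + e 1 0 - m 0 ≤ t ∧
        m 0 + p 0 + p 1 - e 0 0 - e 1 0 - 1 ≤ t ∧ e 0 1 + e 1 1 - m 1 ≤ t ∧
        m 1 + p 0 + p 1 - e 0 1 - e 1 1 - 1 ≤ t) ∧
      (t ≤ p 0 ∧ t ≤ p 1 ∧ t ≤ p 0 + e 1 0 - e 0 0 ∧ t ≤ p 1 + e 0 0 - e 1 0 ∧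
        t ≤ p 0 + e 1 1 - e 0 1 ∧ t ≤ p 1 + e 0 1 - e 1 1) := by
    refine ⟨max (max (max 0 (p 0 + p 1 - 1)) (max (e 0 0 + e 1 0 - m 0)
      (m 0 + p 0 + p 1 - e 0 0 - e 1 0 - 1))) (max (e 0 1 + e 1 1 - m 1)
      (m 1 + p 0 + p 1 - e 0 1 - e 1 1 - 1)), by simp, ?_⟩
    simp only [max_le_iff]
    refine ⟨?_, ?_, ?_, ?_, ?_, ?_⟩ <;> refine ⟨⟨⟨?_, ?_⟩, ?_, ?_⟩, ?_, ?_⟩ <;> linarith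
  have hu : ∀ y, ∃ u, ∀ a a' b, 0 ≤ triple u t (e 0 y) (e 1 y) (p 0) (p 1) (m y) a a' b := by
    rw [Fin.forall_fin_two]
    constructor <;> apply exists_triple <;> linarith
  choose u hu using hu
  refine localFree_of_triples hP
    (fun a a' => ∑ b, triple (u 0) t (e 0 0) (e 1 0) (p 0) (p 1) (m 0) a a' b)
    (fun y => triple (u y) t (e 0 y) (e 1 y) (p 0) (p 1) (m y)) hu ?_ ?_ ?_
  · intro y a a'
    cases a <;> cases a' <;> simp only [triple, Fintype.sum_bool] <;> ring
  · intro y a b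
    cases a <;> cases b <;> simp only [triple, Fintype.sum_bool, he, v1, v2, v3] <;> ring
  · intro y a b
    cases a <;> cases b <;> simp only [triple, Fintype.sum_bool, he, v1, v2, v3] <;> ring

theorem tsirelson_local_fraction (P : Bool → Bool → Fin 2 → Fin 2 → ℝ)
    (hP : IsBehaviour P) (hNS : NonSignalling P)
    (hS : Smax P ≤ 2 * Real.sqrt 2) :
    2 - Real.sqrt 2 ≤ sSup {p : ℝ | p ∈ Set.Icc (0 : ℝ) 1 ∧
      ∃ PL Q : Bool → Bool → Fin 2 → Fin 2 → ℝ,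
        IsBehaviour PL ∧ LocalFree PL ∧ IsBehaviour Q ∧
        ∀ a b x y, P a b x y = p * PL a b x y + (1 - p) * Q a b x y} ∧
    (Smax P = 2 * Real.sqrt 2 →
      sSup {p : ℝ | p ∈ Set.Icc (0 : ℝ) 1 ∧
        ∃ PL Q : Bool → Bool → Fin 2 → Fin 2 → ℝ,
          IsBehaviour PL ∧ LocalFree PL ∧ IsBehaviour Q ∧
          ∀ a b x y, P a b x y = p * PL a b x y + (1 - p) * Q a b x y}
        = 2 - Real.sqrt 2) := by
  change 2 - Real.sqrt 2 ≤ sSup (localWeights P) ∧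
    (Smax P = 2 * Real.sqrt 2 → sSup (localWeights P) = 2 - Real.sqrt 2)
  have hbdd : BddAbove (localWeights P) := ⟨1, fun p hp => hp.1.2⟩
  have hsq : Real.sqrt 2 < 2 := by
    rw [Real.sqrt_lt' (by norm_num)]
    norm_num
  have hsq1 : 1 ≤ Real.sqrt 2 := Real.one_le_sqrt.2 (by norm_num)
  obtain ⟨p, hp, hle⟩ : ∃ p ∈ localWeights P, 2 - Real.sqrt 2 ≤ p := by
    by_cases h : ∀ s, OddPattern s → chsh s P ≤ 2
    · have hL := localFree_of_chsh_le hP hNS h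
      exact ⟨1, ⟨⟨zero_le_one, le_rfl⟩, P, P, hP, hL, hP, fun a b x y => by ring⟩, by linarith⟩
    · push Not at h
      obtain ⟨s, hs, h2⟩ := h
      have hle := (chsh_le_Smax hs P).trans hS
      exact ⟨_, mem_localWeights_of_two_le hs hP hNS h2.le (by linarith), by linarith⟩
  have hge : 2 - Real.sqrt 2 ≤ sSup (localWeights P) := hle.trans (le_csSup hbdd hp)
  refine ⟨hge, fun hmax => le_antisymm (csSup_le ⟨p, hp⟩ fun p' hp' => ?_) hge⟩
  obtain ⟨s, hs, hsP⟩ := exists_chsh_eq_Smax P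
  have := localWeights_le hs hp'
  linarith
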